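/- arXiv:1903.09631 — 2 statements merged into one kernel-verified Lean document; each statement's English description precedes it below -/
import Mathlib

section
/- Let S be a nonempty finite set, p ≥ 1 and m ≥ 1 integers, and q : S × S^p → [0,1] a conditional probability mass function. Define the block kernel K ∈ ℝ^{S^p×S^p} by K_{b,b'} := q(b'₁|b) if (b'₂,…,b'_p) = (b₁,…,b_{p−1}) and 0 otherwise. For a history h = (h₁,…,h_p) ∈ S^p define the trajectory pmf on S^m by P_h(x₁,…,x_m) := Π_{t=1}^m q(x_t | (x_{t−1},…,x₁, h₁,…,h_{p−t+1})) where for t > p the history argument is (x_{t−1},…,x_{t−p}); here histories are listed most recent first. For 1 ≤ ℓ ≤ m let μ_h^{(ℓ)} be the marginal pmf of (x_ℓ,…,x_m) under P_h. Then for any h, h' ∈ S^p that agree in all coordinates except possibly the first (most recent) one, and for all 1 ≤ ℓ ≤ m: (1/2) Σ_{(x_ℓ,…,x_m)} |μ_h^{(ℓ)}(x_ℓ,…,x_m) − μ_{h'}^{(ℓ)}(x_ℓ,…,x_m)| ≤ τ₁(K^p)^{1+⌊(ℓ−1)/p⌋}. -/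
open Finset

/-- The Dobrushin ergodicity coefficient of a matrix `P`. -/
noncomputable def tau1 {T : Type*} [Fintype T] (P : Matrix T T ℝ) : ℝ :=
  sSup {r : ℝ | ∃ u : T → ℝ, u ≠ 0 ∧ (∑ x, u x) = 0 ∧
    r = (∑ x, |Matrix.vecMul u P x|) / (∑ x, |u x|)}

open Classical in
/-- The block kernel of a `p`-Markov process with conditional pmf `q`. -/
noncomputable def blockKernel {S : Type*} [Fintype S] (p : ℕ) (hp : 0 < p)
    (q : S → (Fin p → S) → ℝ) : Matrix (Fin p → S) (Fin p → S) ℝ :=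
  fun b b' =>
    if ∀ (j : Fin p), ∀ _h : (j : ℕ) < p - 1, b' ⟨(j : ℕ) + 1, by omega⟩ = b j then
      q (b' ⟨0, hp⟩) b
    else 0

/-- The history (most recent first) seen before step `t` (0-indexed) of a trajectory
`x` of length `m` started from the initial history `h`. -/
def histTraj {S : Type*} {p m : ℕ} (x : Fin m → S) (h : Fin p → S) (t : Fin m) :
    Fin p → S :=
  fun j =>
    if (j : ℕ) < (t : ℕ) then
      x ⟨(t : ℕ) - 1 - (j : ℕ),
        lt_of_le_of_lt (le_trans (Nat.sub_le _ _) (Nat.sub_le _ _)) t.isLt⟩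
    else
      h ⟨(j : ℕ) - (t : ℕ), lt_of_le_of_lt (Nat.sub_le _ _) j.isLt⟩

/-- Trajectory pmf `P_h` on `S^m` of the `p`-Markov process with conditional pmf `q`
started from the history `h`. -/
def trajPmf {S : Type*} [Fintype S] {p m : ℕ} (q : S → (Fin p → S) → ℝ)
    (h : Fin p → S) (x : Fin m → S) : ℝ :=
  ∏ t : Fin m, q (x t) (histTraj x h t)

/-!
Applied to a stochastic matrix, `τ₁` is the contraction factor in `ℓ¹` of signed vectors of total
mass zero. Let `K` be the block kernel and `T n` the matrix whose row `h` is the law of the next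
`n` symbols after the history `h`. The law of `(x_ℓ,…,x_m)` is the row `h` of `K ^ (ℓ - 1) * T n`
with `n = m - ℓ + 1`. The first `p` symbols after a history determine the history `p` steps later,
and conversely, while the symbols after those are generated from that history alone; hence
`‖v T n‖₁ ≤ ‖v T (p + n)‖₁ = ‖v K ^ p‖₁` for every signed vector `v`. Writing
`K ^ (ℓ - 1) * K ^ p` as `K ^ r * (K ^ p) ^ (1 + ⌊(ℓ - 1) / p⌋)` with `r = (ℓ - 1) % p` and
applying this to `v = δ_h - δ_h'`, whose `ℓ¹` norm is at most `2`, gives the bound.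
-/

open Matrix

section DobrushinCoefficient

variable {T : Type*} [Fintype T]

theorem tau1_nonneg (P : Matrix T T ℝ) : 0 ≤ tau1 P := by
  apply Real.sSup_nonneg
  rintro r ⟨v, -, -, rfl⟩
  positivity

variable [DecidableEq T] {P : Matrix T T ℝ}

theorem sum_vecMul_of_mem_rowStochastic (hP : P ∈ rowStochastic ℝ T) (v : T → ℝ) :
    ∑ y, (v ᵥ* P) y = ∑ x, v x := by
  have hdot : v ᵥ* P ⬝ᵥ 1 = v ⬝ᵥ 1 := by
    rw [← dotProduct_mulVec, one_vecMul_of_mem_rowStochastic hP]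
  simpa only [dotProduct_one] using hdot

theorem sum_abs_vecMul_le_of_mem_rowStochastic (hP : P ∈ rowStochastic ℝ T) (v : T → ℝ) :
    ∑ y, |(v ᵥ* P) y| ≤ ∑ x, |v x| := by
  have habs (y : T) : |(v ᵥ* P) y| ≤ ((fun x => |v x|) ᵥ* P) y := by
    refine (abs_sum_le_sum_abs _ _).trans_eq (sum_congr rfl fun x _ => ?_)
    rw [abs_mul, abs_of_nonneg (nonneg_of_mem_rowStochastic hP)]
  calc ∑ y, |(v ᵥ* P) y| ≤ ∑ y, ((fun x => |v x|) ᵥ* P) y := sum_le_sum fun y _ => habs y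
    _ = ∑ x, |v x| := sum_vecMul_of_mem_rowStochastic hP _

theorem sum_abs_vecMul_le_tau1_mul (hP : P ∈ rowStochastic ℝ T) {v : T → ℝ}
    (hv : ∑ x, v x = 0) : ∑ y, |(v ᵥ* P) y| ≤ tau1 P * ∑ x, |v x| := by
  rcases eq_or_ne v 0 with rfl | hne
  · simp
  have hpos : 0 < ∑ x, |v x| := by
    obtain ⟨x, hx⟩ := Function.ne_iff.mp hne
    exact sum_pos' (fun _ _ => abs_nonneg _) ⟨x, mem_univ x, abs_pos.mpr hx⟩
  rw [← div_le_iff₀ hpos]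
  refine le_csSup ⟨1, ?_⟩ ⟨v, hne, hv, rfl⟩
  rintro r ⟨w, -, -, rfl⟩
  exact div_le_one_of_le₀ (sum_abs_vecMul_le_of_mem_rowStochastic hP w)
    (sum_nonneg fun _ _ => abs_nonneg _)

theorem sum_abs_vecMul_pow_le_tau1_pow_mul (hP : P ∈ rowStochastic ℝ T) {v : T → ℝ}
    (hv : ∑ x, v x = 0) (k : ℕ) :
    ∑ y, |(v ᵥ* P ^ k) y| ≤ tau1 P ^ k * ∑ x, |v x| := by
  induction k with
  | zero => simp
  | succ k ih =>
    have hmass : ∑ y, (v ᵥ* P ^ k) y = 0 := by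
      rw [sum_vecMul_of_mem_rowStochastic (pow_mem hP k), hv]
    calc ∑ y, |(v ᵥ* P ^ (k + 1)) y| = ∑ y, |(v ᵥ* P ^ k ᵥ* P) y| := by
          rw [pow_succ, vecMul_vecMul]
      _ ≤ tau1 P * ∑ y, |(v ᵥ* P ^ k) y| := sum_abs_vecMul_le_tau1_mul hP hmass
      _ ≤ tau1 P * (tau1 P ^ k * ∑ x, |v x|) := mul_le_mul_of_nonneg_left ih (tau1_nonneg P)
      _ = tau1 P ^ (k + 1) * ∑ x, |v x| := by rw [pow_succ', mul_assoc]

theorem sum_abs_single_sub_single_le (a b : T) :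
    ∑ x, |(Pi.single a 1 - Pi.single b 1 : T → ℝ) x| ≤ 2 := by
  calc ∑ x, |(Pi.single a 1 - Pi.single b 1 : T → ℝ) x|
      ≤ ∑ x, (|(Pi.single a 1 : T → ℝ) x| + |(Pi.single b 1 : T → ℝ) x|) :=
        sum_le_sum fun x _ => abs_sub _ _
    _ = 2 := by
        simp only [Pi.single_apply, sum_add_distrib, apply_ite abs, abs_one, abs_zero,
          sum_ite_eq', mem_univ, if_true, one_add_one_eq_two]

end DobrushinCoefficient

section FinAppend

variable {S : Type*} {s n : ℕ}

theorem fin_append_eq_dite (y : Fin s → S) (z : Fin n → S) (i : Fin (s + n)) :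
    Fin.append y z i = if hi : (i : ℕ) < s then y ⟨i, hi⟩ else z ⟨i - s, by omega⟩ := by
  induction i using Fin.addCases with
  | left i => simp
  | right i => simp

theorem sum_eq_sum_append [Fintype S] {M : Type*} [AddCommMonoid M]
    (f : (Fin (s + n) → S) → M) :
    ∑ x, f x = ∑ y : Fin s → S, ∑ z : Fin n → S, f (Fin.append y z) := by
  rw [← (Fin.appendEquiv s n).sum_comp, Fintype.sum_prod_type]
  rfl

end FinAppend

section Histories

variable {S : Type*} {p s n : ℕ}

/-- The history (most recent first) seen after the whole trajectory `x` has been appended to the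
history `h`; `histTraj x h t` is the one seen after the first `t` symbols of `x` only. -/
def histAfter (x : Fin n → S) (h : Fin p → S) : Fin p → S :=
  fun j =>
    if hj : (j : ℕ) < n then x ⟨n - 1 - j, by omega⟩
    else h ⟨j - n, by omega⟩

theorem histAfter_zero (x : Fin 0 → S) (h : Fin p → S) : histAfter x h = h := by
  funext j
  simp [histAfter]

theorem histAfter_eq_comp_rev (x : Fin p → S) (h : Fin p → S) :
    histAfter x h = x ∘ Fin.rev := by
  funext j
  simp only [histAfter, j.isLt, dite_true, Function.comp_apply, Fin.rev, Nat.sub_sub, add_comm]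

theorem histAfter_append (y : Fin s → S) (z : Fin n → S) (h : Fin p → S) :
    histAfter (Fin.append y z) h = histAfter z (histAfter y h) := by
  funext j
  simp only [histAfter, fin_append_eq_dite]
  split_ifs <;> first | omega | (congr 2; omega)

theorem histTraj_append_castAdd (y : Fin s → S) (z : Fin n → S) (h : Fin p → S) (t : Fin s) :
    histTraj (Fin.append y z) h (Fin.castAdd n t) = histTraj y h t := by
  funext j
  simp only [histTraj, fin_append_eq_dite, Fin.val_castAdd]
  split_ifs <;> first | omega | rfl

theorem histTraj_append_natAdd (y : Fin s → S) (z : Fin n → S) (h : Fin p → S) (t : Fin n) :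
    histTraj (Fin.append y z) h (Fin.natAdd s t) = histTraj z (histAfter y h) t := by
  funext j
  simp only [histTraj, histAfter, fin_append_eq_dite, Fin.val_natAdd]
  split_ifs <;> first | omega | (congr 2; omega)

theorem histTraj_zero (x : Fin (n + 1) → S) (h : Fin p → S) : histTraj x h 0 = h := by
  funext j
  simp [histTraj]

theorem histAfter_one_eq_iff (hp : 0 < p) (x : Fin 1 → S) (c b : Fin p → S) :
    histAfter x c = b ↔ x 0 = b ⟨0, hp⟩ ∧
      ∀ (j : Fin p) (_ : (j : ℕ) < p - 1), b ⟨j + 1, by omega⟩ = c j := by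
  constructor
  · rintro rfl
    simp [histAfter]
  · rintro ⟨hfirst, hshift⟩
    funext ⟨j, hj⟩
    cases j with
    | zero => simpa [histAfter] using hfirst
    | succ j => simpa [histAfter] using (hshift ⟨j, by omega⟩ (Nat.lt_sub_of_add_lt hj)).symm

theorem histAfter_one_injective (hp : 0 < p) (c : Fin p → S) :
    Function.Injective fun x : Fin 1 → S => histAfter x c := by
  intro x y hxy
  funext i
  rw [Subsingleton.elim i 0, ((histAfter_one_eq_iff hp x c _).mp hxy).1]
  exact (((histAfter_one_eq_iff hp y c _).mp rfl).1).symm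

end Histories

section TrajPmf

variable {S : Type*} [Fintype S] {p s n : ℕ} {q : S → (Fin p → S) → ℝ}

theorem trajPmf_append (q : S → (Fin p → S) → ℝ) (h : Fin p → S) (y : Fin s → S)
    (z : Fin n → S) :
    trajPmf q h (Fin.append y z) = trajPmf q h y * trajPmf q (histAfter y h) z := by
  simp only [trajPmf, Fin.prod_univ_add, Fin.append_left, Fin.append_right,
    histTraj_append_castAdd, histTraj_append_natAdd]

theorem trajPmf_one (q : S → (Fin p → S) → ℝ) (h : Fin p → S) (x : Fin 1 → S) :
    trajPmf q h x = q (x 0) h := by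
  simp only [trajPmf, Fin.prod_univ_one, histTraj_zero]

theorem trajPmf_nonneg (hq0 : ∀ ξ b, 0 ≤ q ξ b) (h : Fin p → S) (x : Fin n → S) :
    0 ≤ trajPmf q h x :=
  prod_nonneg fun _ _ => hq0 _ _

theorem sum_trajPmf (hqsum : ∀ b, ∑ ξ, q ξ b = 1) (n : ℕ) (h : Fin p → S) :
    ∑ x : Fin n → S, trajPmf q h x = 1 := by
  induction n with
  | zero => simp [trajPmf]
  | succ n ih =>
    have hstep (b : Fin p → S) : ∑ x : Fin 1 → S, trajPmf q b x = 1 := by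
      simp only [trajPmf_one, ← hqsum b]
      exact (Equiv.funUnique (Fin 1) S).sum_comp (q · b)
    simp only [sum_eq_sum_append, trajPmf_append, ← mul_sum, hstep, mul_one, ih]

theorem sum_trajPmf_append (hqsum : ∀ b, ∑ ξ, q ξ b = 1) (h : Fin p → S) (y : Fin s → S) :
    ∑ z : Fin n → S, trajPmf q h (Fin.append y z) = trajPmf q h y := by
  simp only [trajPmf_append, ← mul_sum, sum_trajPmf hqsum, mul_one]

end TrajPmf

section BlockKernel

variable {S : Type*} [Fintype S] {p : ℕ} (hp : 0 < p) {q : S → (Fin p → S) → ℝ}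

theorem blockKernel_histAfter (q : S → (Fin p → S) → ℝ) (c : Fin p → S) (x : Fin 1 → S) :
    blockKernel p hp q c (histAfter x c) = q (x 0) c := by
  obtain ⟨hfirst, hshift⟩ := (histAfter_one_eq_iff hp x c _).mp rfl
  rw [blockKernel, if_pos hshift, hfirst]

theorem blockKernel_eq_zero (q : S → (Fin p → S) → ℝ) {c b : Fin p → S}
    (hb : ∀ x : Fin 1 → S, histAfter x c ≠ b) : blockKernel p hp q c b = 0 :=
  if_neg fun hshift => hb (fun _ => b ⟨0, hp⟩) ((histAfter_one_eq_iff hp _ c b).mpr ⟨rfl, hshift⟩)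

theorem blockKernel_mulVec (q : S → (Fin p → S) → ℝ) (F : (Fin p → S) → ℝ) (h : Fin p → S) :
    (blockKernel p hp q *ᵥ F) h = ∑ x : Fin 1 → S, trajPmf q h x * F (histAfter x h) := by
  symm
  refine Fintype.sum_of_injective _ (histAfter_one_injective hp h) _
    (fun b => blockKernel p hp q h b * F b) (fun b hb => ?_) fun x => ?_
  · rw [blockKernel_eq_zero hp q fun x hx => hb ⟨x, hx⟩, zero_mul]
  · rw [blockKernel_histAfter, trajPmf_one]

variable [DecidableEq S]

theorem blockKernel_pow_mulVec (q : S → (Fin p → S) → ℝ) (n : ℕ) (F : (Fin p → S) → ℝ)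
    (h : Fin p → S) :
    (blockKernel p hp q ^ n *ᵥ F) h =
      ∑ x : Fin n → S, trajPmf q h x * F (histAfter x h) := by
  induction n generalizing F with
  | zero => simp [trajPmf, histAfter_zero]
  | succ n ih =>
    rw [pow_succ, ← mulVec_mulVec, ih]
    simp only [blockKernel_mulVec, sum_eq_sum_append, trajPmf_append, histAfter_append, mul_sum,
      mul_assoc]

theorem blockKernel_mem_rowStochastic (hq0 : ∀ ξ b, 0 ≤ q ξ b) (hqsum : ∀ b, ∑ ξ, q ξ b = 1) :
    blockKernel p hp q ∈ rowStochastic ℝ (Fin p → S) := by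
  refine mem_rowStochastic.mpr ⟨fun b b' => ?_, funext fun b => ?_⟩
  · unfold blockKernel
    split_ifs
    exacts [hq0 _ _, le_rfl]
  · simp only [blockKernel_mulVec, Pi.one_apply, mul_one, sum_trajPmf hqsum]

theorem blockKernel_pow_apply_comp_rev (q : S → (Fin p → S) → ℝ) (h x : Fin p → S) :
    (blockKernel p hp q ^ p) h (x ∘ Fin.rev) = trajPmf q h x := by
  have hrev (y : Fin p → S) : y ∘ Fin.rev = x ∘ Fin.rev ↔ y = x :=
    Fin.rev_surjective.injective_comp_right.eq_iff
  calc (blockKernel p hp q ^ p) h (x ∘ Fin.rev)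
      = (blockKernel p hp q ^ p *ᵥ Pi.single (x ∘ Fin.rev) 1) h := by rw [mulVec_single_one]; rfl
    _ = trajPmf q h x := by
        simp [blockKernel_pow_mulVec, histAfter_eq_comp_rev, Pi.single_apply, hrev]

end BlockKernel

section TrajKernel

variable {S : Type*} [Fintype S] {p : ℕ} {q : S → (Fin p → S) → ℝ}

/-- The transition matrix from histories to words of length `n`: its row `h` is the law of the
first `n` symbols generated after `h`. -/
def trajKernel (q : S → (Fin p → S) → ℝ) (n : ℕ) : Matrix (Fin p → S) (Fin n → S) ℝ :=
  Matrix.of (trajPmf q)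

theorem sum_abs_vecMul_trajKernel_le_add (hqsum : ∀ b, ∑ ξ, q ξ b = 1)
    (v : (Fin p → S) → ℝ) (n k : ℕ) :
    ∑ y, |(v ᵥ* trajKernel q n) y| ≤ ∑ x, |(v ᵥ* trajKernel q (n + k)) x| := by
  have hmarginal (y : Fin n → S) : (v ᵥ* trajKernel q n) y =
      ∑ z : Fin k → S, (v ᵥ* trajKernel q (n + k)) (Fin.append y z) := by
    simp only [vecMul, dotProduct, trajKernel, of_apply]
    rw [sum_comm]
    simp only [← mul_sum, sum_trajPmf_append hqsum]
  rw [sum_eq_sum_append]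
  refine sum_le_sum fun y _ => ?_
  rw [hmarginal]
  exact abs_sum_le_sum_abs _ _

variable [DecidableEq S]

theorem blockKernel_pow_mul_trajKernel_apply (hp : 0 < p) (q : S → (Fin p → S) → ℝ) (s n : ℕ)
    (h : Fin p → S) (z : Fin n → S) :
    (blockKernel p hp q ^ s * trajKernel q n) h z =
      ∑ y : Fin s → S, trajPmf q h (Fin.append y z) := by
  simp only [trajPmf_append]
  exact blockKernel_pow_mulVec hp q s (trajPmf q · z) h

theorem sum_abs_vecMul_trajKernel_add (hp : 0 < p) (hq0 : ∀ ξ b, 0 ≤ q ξ b)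
    (hqsum : ∀ b, ∑ ξ, q ξ b = 1) (v : (Fin p → S) → ℝ) (n : ℕ) :
    ∑ x, |(v ᵥ* trajKernel q (p + n)) x| = ∑ b, |(v ᵥ* blockKernel p hp q ^ p) b| := by
  have hfactor (y : Fin p → S) (z : Fin n → S) :
      (v ᵥ* trajKernel q (p + n)) (Fin.append y z) =
        (v ᵥ* blockKernel p hp q ^ p) (y ∘ Fin.rev) * trajPmf q (y ∘ Fin.rev) z := by
    simp only [vecMul, dotProduct, trajKernel, of_apply, trajPmf_append, histAfter_eq_comp_rev,
      blockKernel_pow_apply_comp_rev, sum_mul, mul_assoc]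
  rw [sum_eq_sum_append]
  simp only [hfactor, abs_mul, abs_of_nonneg (trajPmf_nonneg hq0 _ _), ← mul_sum,
    sum_trajPmf hqsum, mul_one]
  exact (Fin.revPerm.arrowCongr (Equiv.refl S)).sum_comp
    fun b => |(v ᵥ* blockKernel p hp q ^ p) b|

theorem sum_abs_vecMul_trajKernel_le (hp : 0 < p) (hq0 : ∀ ξ b, 0 ≤ q ξ b)
    (hqsum : ∀ b, ∑ ξ, q ξ b = 1) (v : (Fin p → S) → ℝ) (n : ℕ) :
    ∑ z, |(v ᵥ* trajKernel q n) z| ≤ ∑ b, |(v ᵥ* blockKernel p hp q ^ p) b| := by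
  rw [← sum_abs_vecMul_trajKernel_add hp hq0 hqsum v n, add_comm p n]
  exact sum_abs_vecMul_trajKernel_le_add hqsum v n p

theorem sum_abs_vecMul_blockKernel_pow_mul_trajKernel_le (hp : 0 < p)
    (hq0 : ∀ ξ b, 0 ≤ q ξ b) (hqsum : ∀ b, ∑ ξ, q ξ b = 1) {v : (Fin p → S) → ℝ}
    (hv : ∑ b, v b = 0) (s n : ℕ) :
    ∑ z, |(v ᵥ* (blockKernel p hp q ^ s * trajKernel q n)) z| ≤
      tau1 (blockKernel p hp q ^ p) ^ (1 + s / p) * ∑ b, |v b| := by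
  set K := blockKernel p hp q
  have hK : K ∈ rowStochastic ℝ (Fin p → S) := blockKernel_mem_rowStochastic hp hq0 hqsum
  have hexp : s + p = s % p + p * (1 + s / p) := by
    rw [mul_add, mul_one, add_left_comm, Nat.mod_add_div, add_comm]
  have hpow : K ^ s * K ^ p = K ^ (s % p) * (K ^ p) ^ (1 + s / p) := by
    rw [← pow_add, ← pow_mul, ← pow_add, hexp]
  have hmass : ∑ b, (v ᵥ* K ^ (s % p)) b = 0 := by
    rw [sum_vecMul_of_mem_rowStochastic (pow_mem hK _), hv]
  calc ∑ z, |(v ᵥ* (K ^ s * trajKernel q n)) z|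
      = ∑ z, |(v ᵥ* K ^ s ᵥ* trajKernel q n) z| := by rw [vecMul_vecMul]
    _ ≤ ∑ b, |(v ᵥ* K ^ s ᵥ* K ^ p) b| := sum_abs_vecMul_trajKernel_le hp hq0 hqsum _ n
    _ = ∑ b, |(v ᵥ* K ^ (s % p) ᵥ* (K ^ p) ^ (1 + s / p)) b| := by
        rw [vecMul_vecMul, hpow, ← vecMul_vecMul]
    _ ≤ tau1 (K ^ p) ^ (1 + s / p) * ∑ b, |(v ᵥ* K ^ (s % p)) b| :=
        sum_abs_vecMul_pow_le_tau1_pow_mul (pow_mem hK p) hmass _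
    _ ≤ tau1 (K ^ p) ^ (1 + s / p) * ∑ b, |v b| :=
        mul_le_mul_of_nonneg_left (sum_abs_vecMul_le_of_mem_rowStochastic (pow_mem hK _) v)
          (pow_nonneg (tau1_nonneg _) _)

end TrajKernel

section Marginals

/-- The 0-based positions `s, …, s + n - 1` of a trajectory of length `s + n`, enumerated from
`0`; the condition on the right is the one by which `stmt10` selects `x_ℓ, …, x_m` when
`ℓ = s + 1`. -/
def tailEquiv (s n : ℕ) : Fin n ≃ {j : Fin (s + n) // s + 1 ≤ (j : ℕ) + 1} where
  toFun i := ⟨Fin.natAdd s i, by simp⟩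
  invFun j := ⟨(j.1 : ℕ) - s, by omega⟩
  left_inv i := by ext; simp
  right_inv j := by
    have := j.2
    ext
    simp only [Fin.natAdd_mk]
    omega

variable {S : Type*} [Fintype S] [DecidableEq S] {p s n : ℕ}

theorem sum_filter_tail_trajPmf (hp : 0 < p) (q : S → (Fin p → S) → ℝ) (h : Fin p → S)
    (w : {j : Fin (s + n) // s + 1 ≤ (j : ℕ) + 1} → S) :
    ∑ x ∈ univ.filter (fun x : Fin (s + n) → S =>
        ∀ j : {j : Fin (s + n) // s + 1 ≤ (j : ℕ) + 1}, x j.1 = w j), trajPmf q h x =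
      (blockKernel p hp q ^ s * trajKernel q n) h (w ∘ tailEquiv s n) := by
  have htail (y : Fin s → S) (z : Fin n → S) :
      (∀ j : {j : Fin (s + n) // s + 1 ≤ (j : ℕ) + 1}, Fin.append y z j.1 = w j) ↔
        z = w ∘ tailEquiv s n := by
    rw [← (tailEquiv s n).forall_congr_right, funext_iff]
    simp [tailEquiv]
  simp only [sum_filter, sum_eq_sum_append, htail, sum_ite_eq', mem_univ, if_true,
    blockKernel_pow_mul_trajKernel_apply]

end Marginals

theorem stmt10_general {S : Type*} [Fintype S] [DecidableEq S]
    (p m ℓ : ℕ) (hp : 0 < p) (hℓ1 : 1 ≤ ℓ) (hℓm : ℓ ≤ m)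
    (q : S → (Fin p → S) → ℝ)
    (hq0 : ∀ ξ b, 0 ≤ q ξ b) (hqsum : ∀ b, (∑ ξ : S, q ξ b) = 1) (h h' : Fin p → S) :
    (1 / 2) * (∑ w : {j : Fin m // ℓ ≤ (j : ℕ) + 1} → S,
        |(∑ x ∈ Finset.univ.filter
            (fun x : Fin m → S => ∀ j : {j : Fin m // ℓ ≤ (j : ℕ) + 1}, x j.1 = w j),
            trajPmf q h x) -
         (∑ x ∈ Finset.univ.filter
            (fun x : Fin m → S => ∀ j : {j : Fin m // ℓ ≤ (j : ℕ) + 1}, x j.1 = w j),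
            trajPmf q h' x)|) ≤
      tau1 (blockKernel p hp q ^ p) ^ (1 + (ℓ - 1) / p) := by
  obtain ⟨s, rfl⟩ : ∃ s, ℓ = s + 1 := ⟨ℓ - 1, by omega⟩
  obtain ⟨n, rfl⟩ : ∃ n, m = s + n := ⟨m - s, by omega⟩
  set A := blockKernel p hp q ^ s * trajKernel q n with hA
  let v : (Fin p → S) → ℝ := Pi.single h 1 - Pi.single h' 1
  have hv : ∑ b, v b = 0 := by simp [v]
  have hdiff (z : Fin n → S) : A h z - A h' z = (v ᵥ* A) z := by
    simp [v, sub_vecMul]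
  simp only [sum_filter_tail_trajPmf hp, ← hA, hdiff, Nat.add_sub_cancel]
  have hreindex : ∑ w, |(v ᵥ* A) (w ∘ tailEquiv s n)| = ∑ z, |(v ᵥ* A) z| :=
    ((tailEquiv s n).symm.arrowCongr (Equiv.refl S)).sum_comp fun z => |(v ᵥ* A) z|
  rw [hreindex]
  have hτ : 0 ≤ tau1 (blockKernel p hp q ^ p) := tau1_nonneg _
  calc 1 / 2 * ∑ z, |(v ᵥ* A) z|
      ≤ 1 / 2 * (tau1 (blockKernel p hp q ^ p) ^ (1 + s / p) * ∑ b, |v b|) := by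
        gcongr
        exact sum_abs_vecMul_blockKernel_pow_mul_trajKernel_le hp hq0 hqsum hv s n
    _ ≤ 1 / 2 * (tau1 (blockKernel p hp q ^ p) ^ (1 + s / p) * 2) := by
        gcongr
        exact sum_abs_single_sub_single_le h h'
    _ = tau1 (blockKernel p hp q ^ p) ^ (1 + s / p) := by ring

/-- for two initial histories agreeing except possibly in the most
recent coordinate, the total-variation distance between the marginal laws of
`(x_ℓ,…,x_m)` is at most `τ₁(K^p)^{1+⌊(ℓ−1)/p⌋}`. -/
theorem stmt10 {S : Type*} [Fintype S] [Nonempty S] [DecidableEq S]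
    (p m ℓ : ℕ) (hp : 0 < p) (hm : 0 < m) (hℓ1 : 1 ≤ ℓ) (hℓm : ℓ ≤ m)
    (q : S → (Fin p → S) → ℝ)
    (hq0 : ∀ ξ b, 0 ≤ q ξ b) (hq1 : ∀ ξ b, q ξ b ≤ 1)
    (hqsum : ∀ b, (∑ ξ : S, q ξ b) = 1)
    (h h' : Fin p → S) (hagree : ∀ j : Fin p, (j : ℕ) ≠ 0 → h j = h' j) :
    (1 / 2) * (∑ w : {j : Fin m // ℓ ≤ (j : ℕ) + 1} → S,
        |(∑ x ∈ Finset.univ.filter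
            (fun x : Fin m → S => ∀ j : {j : Fin m // ℓ ≤ (j : ℕ) + 1}, x j.1 = w j),
            trajPmf q h x) -
         (∑ x ∈ Finset.univ.filter
            (fun x : Fin m → S => ∀ j : {j : Fin m // ℓ ≤ (j : ℕ) + 1}, x j.1 = w j),
            trajPmf q h' x)|) ≤
      tau1 (blockKernel p hp q ^ p) ^ (1 + (ℓ - 1) / p) :=
  stmt10_general p m ℓ hp hℓ1 hℓm q hq0 hqsum h h'
end

section
/- There exist universal constants C₁ > 0 and C₂ > 0 with the following property. Let n, N, d be positive integers with Nd ≥ 2, and let 𝖷 ∈ ℝ^{n×d} be a matrix whose columns satisfy ‖𝖷_{*j}‖₂ ≤ √n for all j ∈ [d]. Define the pseudometric ρ on ℝ^{N×d} by ρ(D₁, D₂) := (1/√n)·‖𝖷(D₁−D₂)ᵀ‖_F, and the ℓ1 ball B₁(u) := {D ∈ ℝ^{N×d} : Σ_{i,j}|D_{ij}| ≤ u} for u > 0. Then for every u > 0 and every ε with 0 < ε ≤ C₁u, there exists a finite set T ⊆ ℝ^{N×d} with |T| ≤ exp( C₂ · (u²/ε²) · log(Nd) ) such that every D ∈ B₁(u)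 satisfies ρ(D, D') ≤ ε for some D' ∈ T. -/
open Finset

/-!
Maurey's empirical method. If `‖v i‖ ≤ R` for all `i` and `x` lies in the convex hull of the `v i`,
then for every `y` some `v i` satisfies `⟪y + x, v i⟫ ≥ ⟪y + x, x⟫`, whence
`‖y + (x - v i)‖² ≤ ‖y‖² + R²`. Starting from `y = x` and iterating `K` times yields `K` of the
`v i` whose sum is within `√(K + 1) R` of `(K + 1) x`. Thus the `(#ι) ^ K` points
`(K + 1)⁻¹ (v i₁ + ⋯ + v i_K)` form an `R / √(K + 1)`-net of the hull. The `ℓ1` ball of radius `u`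
is the convex hull of the `2Nd` matrices `± u E_ij`, whose images under `D ↦ 𝖷Dᵀ` have norm at
most `u√n`; take `K = ⌊u² / ε²⌋`.
-/

open scoped RealInnerProductSpace

theorem norm_le_of_mem_convexHull_range {E ι : Type*} [SeminormedAddCommGroup E] [NormedSpace ℝ E]
    {v : ι → E} {R : ℝ} (hv : ∀ i, ‖v i‖ ≤ R) {x : E} (hx : x ∈ convexHull ℝ (Set.range v)) :
    ‖x‖ ≤ R := by
  have hball : Set.range v ⊆ Metric.closedBall 0 R :=
    Set.range_subset_iff.2 fun i => mem_closedBall_zero_iff.2 (hv i)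
  exact mem_closedBall_zero_iff.1 (convexHull_min hball (convex_closedBall 0 R) hx)

section Maurey

variable {E : Type*} [SeminormedAddCommGroup E] [InnerProductSpace ℝ E]

theorem exists_inner_le_inner_of_mem_convexHull {s : Set E} {x : E} (hx : x ∈ convexHull ℝ s)
    (y : E) : ∃ z ∈ s, ⟪y, x⟫ ≤ ⟪y, z⟫ :=
  ((innerₛₗ ℝ y).convexOn convex_univ).exists_ge_of_mem_convexHull s.subset_univ hx

theorem exists_norm_add_sub_sq_le {s : Set E} {R : ℝ} (hs : ∀ z ∈ s, ‖z‖ ≤ R) {x : E}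
    (hx : x ∈ convexHull ℝ s) (y : E) :
    ∃ z ∈ s, ‖y + (x - z)‖ ^ 2 ≤ ‖y‖ ^ 2 + R ^ 2 := by
  obtain ⟨z, hz, hxz⟩ := exists_inner_le_inner_of_mem_convexHull hx (y + x)
  have hzR : ‖z‖ ^ 2 ≤ R ^ 2 := pow_le_pow_left₀ (norm_nonneg z) (hs z hz) 2
  refine ⟨z, hz, ?_⟩
  calc ‖y + (x - z)‖ ^ 2
      = ‖y + x‖ ^ 2 - 2 * ⟪y + x, z⟫ + ‖z‖ ^ 2 := by rw [← add_sub_assoc, norm_sub_sq_real]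
    _ ≤ ‖y + x‖ ^ 2 - 2 * ⟪y + x, x⟫ + R ^ 2 := by gcongr
    _ = ‖y‖ ^ 2 - ‖x‖ ^ 2 + R ^ 2 := by
        rw [norm_add_sq_real, inner_add_left, real_inner_self_eq_norm_sq]; ring
    _ ≤ ‖y‖ ^ 2 + R ^ 2 := by linarith [sq_nonneg ‖x‖]

variable {ι : Type*} {v : ι → E} {R : ℝ} {x : E}

theorem exists_norm_add_smul_sub_sum_sq_le (hv : ∀ i, ‖v i‖ ≤ R)
    (hx : x ∈ convexHull ℝ (Set.range v)) (y : E) (K : ℕ) :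
    ∃ s : Fin K → ι, ‖y + ((K : ℝ) • x - ∑ k, v (s k))‖ ^ 2 ≤ ‖y‖ ^ 2 + K * R ^ 2 := by
  induction K with
  | zero => exact ⟨Fin.elim0, by simp⟩
  | succ K ih =>
    obtain ⟨s, hs⟩ := ih
    obtain ⟨_, ⟨i, rfl⟩, hi⟩ := exists_norm_add_sub_sq_le (Set.forall_mem_range.2 hv) hx
      (y + ((K : ℝ) • x - ∑ k, v (s k)))
    refine ⟨Fin.cons i s, ?_⟩
    have hsplit : y + (((K + 1 : ℕ) : ℝ) • x - ∑ k, v ((Fin.cons i s : Fin (K + 1) → ι) k))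
        = y + ((K : ℝ) • x - ∑ k, v (s k)) + (x - v i) := by
      simp only [Fin.sum_univ_succ, Fin.cons_zero, Fin.cons_succ]
      push_cast
      module
    rw [hsplit]
    push_cast
    linarith

theorem exists_norm_sub_inv_smul_sum_le (hv : ∀ i, ‖v i‖ ≤ R)
    (hx : x ∈ convexHull ℝ (Set.range v)) (K : ℕ) :
    ∃ s : Fin K → ι, ‖x - ((K : ℝ) + 1)⁻¹ • ∑ k, v (s k)‖ ≤ R / √(K + 1) := by
  have hxR : ‖x‖ ≤ R := norm_le_of_mem_convexHull_range hv hx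
  have hR : 0 ≤ R := (norm_nonneg x).trans hxR
  have hK : (0 : ℝ) < K + 1 := by positivity
  -- Starting the greedy choice at `x` itself gains one unit in the denominator.
  obtain ⟨s, hs⟩ := exists_norm_add_smul_sub_sum_sq_le hv hx x K
  refine ⟨s, ?_⟩
  have hscale : x - ((K : ℝ) + 1)⁻¹ • ∑ k, v (s k)
      = ((K : ℝ) + 1)⁻¹ • (x + ((K : ℝ) • x - ∑ k, v (s k))) := by
    match_scalars
    · field_simp
      ring
    · field_simp
  have hsq : ‖x + ((K : ℝ) • x - ∑ k, v (s k))‖ ^ 2 ≤ (K + 1) * R ^ 2 := by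
    linarith [pow_le_pow_left₀ (norm_nonneg x) hxR 2]
  have hnorm : ‖x + ((K : ℝ) • x - ∑ k, v (s k))‖ ≤ √(K + 1) * R := by
    rw [← Real.sqrt_sq hR, ← Real.sqrt_mul hK.le]
    exact Real.le_sqrt_of_sq_le hsq
  calc ‖x - ((K : ℝ) + 1)⁻¹ • ∑ k, v (s k)‖
      = ((K : ℝ) + 1)⁻¹ * ‖x + ((K : ℝ) • x - ∑ k, v (s k))‖ := by
        rw [hscale, norm_smul_of_nonneg (by positivity)]
    _ ≤ ((K : ℝ) + 1)⁻¹ * (√(K + 1) * R) := by gcongr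
    _ = R / √(K + 1) := by
        rw [← mul_assoc, inv_mul_eq_div, Real.sqrt_div_self', one_div_mul_eq_div]

end Maurey

section Covering

variable {V E ι : Type*} [AddCommGroup V] [Module ℝ V] [SeminormedAddCommGroup E]
  [InnerProductSpace ℝ E] [Fintype ι]

theorem exists_finset_cover_convexHull_range (L : V →ₗ[ℝ] E) {v : ι → V} {R : ℝ}
    (hv : ∀ i, ‖L (v i)‖ ≤ R) (K : ℕ) :
    ∃ T : Finset V, #T ≤ Fintype.card ι ^ K ∧
      ∀ x ∈ convexHull ℝ (Set.range v), ∃ y ∈ T, ‖L (x - y)‖ ≤ R / √(K + 1) := by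
  classical
  let average (s : Fin K → ι) : V := ((K : ℝ) + 1)⁻¹ • ∑ k, v (s k)
  refine ⟨univ.image average, card_image_le.trans (by simp), fun x hx => ?_⟩
  have hLx : L x ∈ convexHull ℝ (Set.range fun i => L (v i)) := by
    rw [Set.range_comp' L v, ← L.image_convexHull]
    exact Set.mem_image_of_mem L hx
  obtain ⟨s, hs⟩ := exists_norm_sub_inv_smul_sum_le hv hLx K
  refine ⟨average s, mem_image_of_mem average (mem_univ s), ?_⟩
  simpa only [average, map_sub, map_smul, map_sum] using hs

theorem exists_finset_cover_absConvexHull_range (L : V →ₗ[ℝ] E) {v : ι → V} {R : ℝ}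
    (hv : ∀ i, ‖L (v i)‖ ≤ R) (K : ℕ) :
    ∃ T : Finset V, #T ≤ (2 * Fintype.card ι) ^ K ∧
      ∀ x ∈ absConvexHull ℝ (Set.range v), ∃ y ∈ T, ‖L (x - y)‖ ≤ R / √(K + 1) := by
  have hatoms : ∀ i : ι ⊕ ι, ‖L (Sum.elim v (-v) i)‖ ≤ R := by simpa using hv
  have hrange : Set.range (Sum.elim v (-v)) = Set.range v ∪ -Set.range v := by
    rw [Set.Sum.elim_range, Set.neg_range]
    rfl
  simpa only [hrange, convexHull_union_neg_eq_absConvexHull, Fintype.card_sum, ← two_mul]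
    using exists_finset_cover_convexHull_range L hatoms K

end Covering

theorem sum_smul_mem_of_absConvex {V ι : Type*} [AddCommGroup V] [Module ℝ V] {s : Set V}
    (hs : AbsConvex ℝ s) (hne : s.Nonempty) {t : Finset ι} {c : ι → ℝ} {v : ι → V}
    (hv : ∀ i ∈ t, v i ∈ s) (hc : ∑ i ∈ t, |c i| ≤ 1) : ∑ i ∈ t, c i • v i ∈ s := by
  have hnonneg : ∀ i ∈ t, 0 ≤ |c i| := fun i _ => abs_nonneg (c i)
  rcases (sum_nonneg hnonneg).eq_or_lt with hzero | hpos
  · have hc0 : ∀ i ∈ t, c i • v i = 0 := fun i hi => by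
      rw [abs_eq_zero.1 ((sum_eq_zero_iff_of_nonneg hnonneg).1 hzero.symm i hi), zero_smul]
    rw [sum_eq_zero hc0]
    exact hs.1.zero_mem hne
  · have hsign : ∀ i ∈ t, (SignType.sign (c i) : ℝ) • v i ∈ s := fun i hi =>
      hs.1.smul_mem (by rcases SignType.sign (c i) with _ | _ | _ <;> simp) (hv i hi)
    have hcenter := hs.2.centerMass_mem hnonneg hpos hsign
    have hscaled := hs.1.smul_mem (by rwa [Real.norm_of_nonneg hpos.le]) hcenter
    simpa only [centerMass, smul_inv_smul₀ hpos.ne', smul_smul, abs_mul_sign] using hscaled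

section Matrix

variable {m ι κ : Type*} [Fintype ι] [Fintype κ]

theorem mem_absConvexHull_range_single [DecidableEq ι] [DecidableEq κ] [Nonempty ι] [Nonempty κ]
    {u : ℝ} (hu : 0 < u) {D : Matrix ι κ ℝ} (hD : ∑ i, ∑ j, |D i j| ≤ u) :
    D ∈ absConvexHull ℝ (Set.range fun p : ι × κ => Matrix.single p.1 p.2 u) := by
  have hcoeff : ∑ p : ι × κ, |D p.1 p.2 / u| ≤ 1 := by
    simp only [abs_div, abs_of_pos hu, ← sum_div, Fintype.sum_prod_type]
    exact (div_le_one hu).2 hD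
  have hexpand : D = ∑ p : ι × κ, (D p.1 p.2 / u) • Matrix.single p.1 p.2 u := by
    simp only [Matrix.smul_single, smul_eq_mul, div_mul_cancel₀ _ hu.ne', Fintype.sum_prod_type]
    exact Matrix.matrix_eq_sum_single D
  rw [hexpand]
  exact sum_smul_mem_of_absConvex absConvex_absConvexHull
    (absConvexHull_nonempty.2 (Set.range_nonempty _))
    (fun p _ => subset_absConvexHull (Set.mem_range_self p)) hcoeff

/-- The linear map `D ↦ 𝖷Dᵀ`, whose values are viewed in a Euclidean space so that their norm is the
Frobenius norm; thus `ρ D₁ D₂ = ‖designMap 𝖷 (D₁ - D₂)‖ / √n`. -/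
noncomputable def designMap (X : Matrix m κ ℝ) :
    Matrix ι κ ℝ →ₗ[ℝ] EuclideanSpace ℝ (m × ι) where
  toFun D := WithLp.toLp 2 fun p => (X * D.transpose) p.1 p.2
  map_add' D₁ D₂ := by ext; simp [Matrix.mul_add]
  map_smul' c D := by ext; simp

variable [Fintype m]

theorem norm_designMap (X : Matrix m κ ℝ) (D : Matrix ι κ ℝ) :
    ‖designMap X D‖ = √(∑ t, ∑ i, (∑ j, X t j * D i j) ^ 2) := by
  simp only [designMap, LinearMap.coe_mk, AddHom.coe_mk, EuclideanSpace.norm_eq, Real.norm_eq_abs,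
    sq_abs, Fintype.sum_prod_type, Matrix.mul_apply, Matrix.transpose_apply]

theorem norm_designMap_single [DecidableEq ι] [DecidableEq κ] (X : Matrix m κ ℝ) (i : ι) (j : κ)
    (c : ℝ) : ‖designMap X (Matrix.single i j c)‖ = √(∑ t, X t j ^ 2) * |c| := by
  have hrow (t : m) : ∑ i', (∑ j', X t j' * Matrix.single i j c i' j') ^ 2 = X t j ^ 2 * c ^ 2 := by
    simp [Matrix.single_apply, ite_and, mul_pow]
  rw [norm_designMap, sum_congr rfl fun t _ => hrow t, ← sum_mul,
    Real.sqrt_mul (sum_nonneg fun t _ => sq_nonneg (X t j)), Real.sqrt_sq_eq_abs]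

theorem exists_finset_cover_sum_abs_le [Nonempty ι] [Nonempty κ] {X : Matrix m κ ℝ} {r : ℝ}
    (hX : ∀ j, √(∑ t, X t j ^ 2) ≤ r) {u : ℝ} (hu : 0 < u) (K : ℕ) :
    ∃ T : Finset (Matrix ι κ ℝ), #T ≤ (2 * (Fintype.card ι * Fintype.card κ)) ^ K ∧
      ∀ D : Matrix ι κ ℝ, ∑ i, ∑ j, |D i j| ≤ u →
        ∃ D' ∈ T, ‖designMap X (D - D')‖ ≤ r * u / √(K + 1) := by
  classical
  have hatoms : ∀ p : ι × κ, ‖designMap X (Matrix.single p.1 p.2 u)‖ ≤ r * u := fun p => by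
    rw [norm_designMap_single, abs_of_pos hu]
    gcongr
    exact hX p.2
  obtain ⟨T, hT, hcover⟩ := exists_finset_cover_absConvexHull_range (designMap X)
    (v := fun p : ι × κ => Matrix.single p.1 p.2 u) hatoms K
  rw [Fintype.card_prod] at hT
  exact ⟨T, hT, fun D hD => hcover D (mem_absConvexHull_range_single hu hD)⟩

end Matrix

theorem two_mul_pow_le_exp {a : ℝ} (ha : 2 ≤ a) {K : ℕ} {r : ℝ} (hK : K ≤ r) :
    (2 * a) ^ K ≤ Real.exp (2 * r * Real.log a) := by
  have hlog : 0 ≤ Real.log a := Real.log_nonneg (by linarith)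
  calc (2 * a) ^ K ≤ (a * a) ^ K := by gcongr
    _ = Real.exp (2 * K * Real.log a) := by
        rw [← sq, ← pow_mul, ← Real.exp_log (pow_pos (by linarith : 0 < a) _), Real.log_pow]
        push_cast
        rfl
    _ ≤ Real.exp (2 * r * Real.log a) := by gcongr

theorem div_sqrt_floor_add_one_le (u : ℝ) {ε : ℝ} (hε : 0 < ε) :
    u / √(⌊u ^ 2 / ε ^ 2⌋₊ + 1) ≤ ε := by
  have hratio : u / ε ≤ √(⌊u ^ 2 / ε ^ 2⌋₊ + 1) := by
    apply Real.le_sqrt_of_sq_le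
    rw [div_pow]
    exact (Nat.lt_floor_add_one _).le
  rw [div_le_iff₀ (by positivity)]
  exact (div_le_iff₀' hε).1 hratio

theorem stmt17_general {m ι κ : Type*} [Fintype m] [Nonempty m] [Fintype ι] [Fintype κ]
    (hcard : 2 ≤ Fintype.card ι * Fintype.card κ) (X : Matrix m κ ℝ)
    (hX : ∀ j, √(∑ t, X t j ^ 2) ≤ √(Fintype.card m)) {u : ℝ} (hu : 0 < u) {ε : ℝ} (hε : 0 < ε) :
    ∃ T : Finset (Matrix ι κ ℝ),
      #T ≤ Real.exp (2 * (u ^ 2 / ε ^ 2) * Real.log (Fintype.card ι * Fintype.card κ)) ∧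
      ∀ D : Matrix ι κ ℝ, ∑ i, ∑ j, |D i j| ≤ u →
        ∃ D' ∈ T, 1 / √(Fintype.card m) *
          √(∑ t, ∑ i, (∑ j, X t j * (D i j - D' i j)) ^ 2) ≤ ε := by
  obtain ⟨hι, hκ⟩ := CanonicallyOrderedAdd.mul_pos.1 (two_pos.trans_le hcard)
  have : Nonempty ι := Fintype.card_pos_iff.1 hι
  have : Nonempty κ := Fintype.card_pos_iff.1 hκ
  set K := ⌊u ^ 2 / ε ^ 2⌋₊
  obtain ⟨T, hT, hcover⟩ := exists_finset_cover_sum_abs_le (ι := ι) hX hu K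
  refine ⟨T, ?_, fun D hD => ?_⟩
  · calc (#T : ℝ) ≤ (2 * (Fintype.card ι * Fintype.card κ)) ^ K := by exact_mod_cast hT
      _ ≤ _ := two_mul_pow_le_exp (by exact_mod_cast hcard) (Nat.floor_le (by positivity))
  · obtain ⟨D', hD', hdist⟩ := hcover D hD
    have hm : 0 < √(Fintype.card m) := Real.sqrt_pos.2 (by exact_mod_cast Fintype.card_pos)
    refine ⟨D', hD', ?_⟩
    simp only [← Matrix.sub_apply]
    rw [← norm_designMap, one_div, inv_mul_le_iff₀ hm]
    calc ‖designMap X (D - D')‖ ≤ √(Fintype.card m) * (u / √(K + 1)) := by rwa [← mul_div_assoc]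
      _ ≤ √(Fintype.card m) * ε := by gcongr; exact div_sqrt_floor_add_one_le u hε

/-- metric entropy bound for the elementwise `ℓ1` ball of matrices with
respect to the design-induced pseudometric `ρ(D₁,D₂) = (1/√n)‖𝖷(D₁−D₂)ᵀ‖_F`. -/
theorem stmt17 :
    ∃ C₁ : ℝ, 0 < C₁ ∧ ∃ C₂ : ℝ, 0 < C₂ ∧
      ∀ (n N d : ℕ), 1 ≤ n → 1 ≤ N → 1 ≤ d → 2 ≤ N * d →
      ∀ X : Fin n → Fin d → ℝ,
        (∀ j, Real.sqrt (∑ t, (X t j) ^ 2) ≤ Real.sqrt (n : ℝ)) →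
      ∀ u : ℝ, 0 < u → ∀ ε : ℝ, 0 < ε → ε ≤ C₁ * u →
      ∃ T : Finset (Fin N → Fin d → ℝ),
        (T.card : ℝ) ≤
          Real.exp (C₂ * (u ^ 2 / ε ^ 2) * Real.log ((N : ℝ) * (d : ℝ))) ∧
        ∀ D : Fin N → Fin d → ℝ, (∑ i, ∑ j, |D i j|) ≤ u →
          ∃ D' ∈ T,
            (1 / Real.sqrt (n : ℝ)) *
              Real.sqrt (∑ t, ∑ i, (∑ j, X t j * (D i j - D' i j)) ^ 2) ≤ ε := by
  refine ⟨1, one_pos, 2, two_pos, fun n N d hn _ _ hNd X hX u hu ε hε _ => ?_⟩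
  have : NeZero n := ⟨by omega⟩
  have hcover := stmt17_general (ι := Fin N) (κ := Fin d) (by simpa using hNd) (Matrix.of X)
    (by simpa using hX) hu hε
  simp only [Fintype.card_fin] at hcover
  exact hcover
end
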